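/- Let H be the Hilbert space of real n×n matrices equipped with the Frobenius inner product, let 1 ≤ r ≤ n, let Σ := {M ∈ ℝ^{n×n} : rank(M) ≤ r} (a union of linear subspaces of H), and let f be the nuclear norm (the sum of the singular values). Then δ_Σ(f) ≥ 1/√2. -/

import Mathlib

noncomputable section
open scoped ENNReal NNReal Pointwise RealInnerProductSpace
open Filter Set Classical MeasureTheory ProbabilityTheory

/-- The secant set `Σ - Σ` of a model set. -/
def secantSet {H : Type*} [NormedAddCommGroup H] (S : Set H) : Set H :=
  {u | ∃ x ∈ S, ∃ y ∈ S, u = x - y}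

/-- The normalized secant set of a model set. -/
def normSecant {H : Type*} [NormedAddCommGroup H] [NormedSpace ℝ H] (S : Set H) : Set H :=
  {z | ∃ y ∈ secantSet S, y ≠ 0 ∧ z = ‖y‖⁻¹ • y}

/-- The atomic "norm" induced by a set of atoms `A`: `‖x‖_A = inf {t ≥ 0 : x ∈ t·cl(conv A)}`,
with value `+∞` when no such `t` exists. -/
def atomicNorm {H : Type*} [NormedAddCommGroup H] [NormedSpace ℝ H] (A : Set H) (x : H) :
    ℝ≥0∞ :=
  sInf {t : ℝ≥0∞ | ∃ r : ℝ, 0 ≤ r ∧ t = ENNReal.ofReal r ∧ x ∈ r • closure (convexHull ℝ A)}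

/-- `‖·‖_Σ`, the atomic norm whose atoms are the unit-norm elements of `S`. -/
def sigmaNorm {H : Type*} [NormedAddCommGroup H] [NormedSpace ℝ H] (S : Set H) : H → ℝ≥0∞ :=
  atomicNorm (S ∩ {u : H | ‖u‖ = 1})

/-- `δ_Σ(x,z)`, with the convention that it is `0` when `‖x+z‖_Σ = +∞`. -/
def deltaXZ (𝕜 : Type*) [RCLike 𝕜] {H : Type*} [NormedAddCommGroup H]
    [InnerProductSpace 𝕜 H] [NormedSpace ℝ H] (S : Set H) (x z : H) : ℝ :=
  if sigmaNorm S (x + z) = ⊤ then 0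
  else (-(RCLike.re (inner 𝕜 x z : 𝕜))) /
    (‖x‖ * Real.sqrt ((sigmaNorm S (x + z)).toReal ^ 2 - ‖x‖ ^ 2
      - 2 * RCLike.re (inner 𝕜 x z : 𝕜)))

/-- The set of descent vectors of `f` at points of `S`. -/
def descentSet {H : Type*} [NormedAddCommGroup H] (S : Set H) (f : H → ℝ≥0∞) : Set H :=
  {z | ∃ x ∈ S, f (x + z) ≤ f x}

/-- The admissibility condition on `x` in the supremum defining `δ_Σ(f)`:
`x ∈ Σ`, `x ≠ 0` and `‖x+z‖_Σ² - ‖x‖² - 2 Re⟪x,z⟫ > 0` (satisfied in particular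
when `‖x+z‖_Σ = +∞`). -/
def deltaAdmissible (𝕜 : Type*) [RCLike 𝕜] {H : Type*} [NormedAddCommGroup H]
    [InnerProductSpace 𝕜 H] [NormedSpace ℝ H] (S : Set H) (z x : H) : Prop :=
  x ∈ S ∧ x ≠ 0 ∧
    (sigmaNorm S (x + z) = ⊤ ∨
      0 < (sigmaNorm S (x + z)).toReal ^ 2 - ‖x‖ ^ 2 - 2 * RCLike.re (inner 𝕜 x z : 𝕜))

/-- The RIP constant `δ_Σ(f) = inf_{z ∈ T_f(Σ), z ≠ 0} sup_x δ_Σ(x,z)`. -/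
def deltaSigma (𝕜 : Type*) [RCLike 𝕜] {H : Type*} [NormedAddCommGroup H]
    [InnerProductSpace 𝕜 H] [NormedSpace ℝ H] (S : Set H) (f : H → ℝ≥0∞) : ℝ :=
  sInf {d : ℝ | ∃ z ∈ descentSet S f, z ≠ 0 ∧
    d = sSup {c : ℝ | ∃ x : H, deltaAdmissible 𝕜 S z x ∧ c = deltaXZ 𝕜 S x z}}

/-- `S` is a union of linear subspaces. -/
def IsUnionOfSubspaces (𝕜 : Type*) [RCLike 𝕜] {H : Type*} [NormedAddCommGroup H]
    [InnerProductSpace 𝕜 H] (S : Set H) : Prop :=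
  ∃ 𝒮 : Set (Submodule 𝕜 H), S = ⋃ W ∈ 𝒮, (W : Set H)

/-- The nuclear norm of a real square matrix: the sum of its singular values, i.e. of the
square roots of the eigenvalues of `AᴴA`. -/
def nuclearNorm (n : ℕ) (A : Matrix (Fin n) (Fin n) ℝ) : ℝ :=
  ∑ i, Real.sqrt ((Matrix.isHermitian_conjTranspose_mul_self A).eigenvalues i)

/-!
Let `z` be a descent direction at a matrix `x` of rank at most `r`. Mirsky's inequality
`∑ |σᵢ(x) - σᵢ(z)| ≤ ‖x + z‖_*` and `‖x + z‖_* ≤ ‖x‖_*` show that the singular values of `z` beyond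
the `r` largest sum to at most the sum of the `r` largest. Split the singular value decomposition
of `z` accordingly as `head + tail`. Since every singular value of `tail` is at most the average `α`
of those of `head`, and they sum to at most `r α`, `tail` is a convex combination of matrices with
at most `r` singular values, all equal to `α`. These have Frobenius norm at most `√r α ≤ ‖head‖`,
hence `‖tail‖_Σ ≤ ‖head‖`. Taking `y = -head` in the supremum, `⟪y, z⟫ = -‖head‖²` and
`y + z = tail`, so the quotient is at least `‖head‖² / (‖head‖ √(2 ‖head‖²)) = 1 / √2`.

Mirsky's inequality is the Lidskii–Mirsky eigenvalue inequality for the self-adjoint dilations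
`(u, v) ↦ (T⋆ v, T u)`, which in turn follows from Weyl's monotonicity principle by taking traces.
-/

open Module (finrank)

section Eigenbasis

variable {𝕜 E ι κ : Type*} [RCLike 𝕜] [NormedAddCommGroup E] [InnerProductSpace 𝕜 E]
  [Fintype ι] [Fintype κ]

/-- `b` is an orthonormal basis of eigenvectors of `T`, with real eigenvalues `a`. The index type
is arbitrary, so that the sorted spectrum of an operator can be indexed by any linear order. -/
def IsEigenbasis (T : E →ₗ[𝕜] E) (b : OrthonormalBasis ι 𝕜 E) (a : ι → ℝ) : Prop :=
  ∀ i, T (b i) = (a i : 𝕜) • b i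

namespace IsEigenbasis

variable {T : E →ₗ[𝕜] E} {b : OrthonormalBasis ι 𝕜 E} {a : ι → ℝ}

lemma inner_map_left (hT : IsEigenbasis T b a) (x : E) (i : ι) :
    inner 𝕜 (b i) (T x) = a i * inner 𝕜 (b i) x := by
  classical
  conv_lhs => rw [← b.sum_repr' x]
  simp only [map_sum, map_smul, hT _, inner_sum, inner_smul_right, b.inner_eq_ite, mul_ite,
    mul_one, mul_zero, Finset.sum_ite_eq, Finset.mem_univ, if_true]
  ring

lemma inner_map_right (hT : IsEigenbasis T b a) (x y : E) :
    inner 𝕜 x (T y) = ∑ i, a i * (inner 𝕜 x (b i) * inner 𝕜 (b i) y) := by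
  rw [← b.sum_inner_mul_inner]
  exact Finset.sum_congr rfl fun i _ => by rw [hT.inner_map_left]; ring

lemma isSymmetric (hT : IsEigenbasis T b a) : T.IsSymmetric := fun x y => by
  rw [← inner_conj_symm, hT.inner_map_right, hT.inner_map_right, map_sum]
  refine Finset.sum_congr rfl fun i _ => ?_
  simp only [map_mul, RCLike.conj_ofReal, inner_conj_symm]
  ring

lemma re_inner_map_self (hT : IsEigenbasis T b a) (x : E) :
    RCLike.re (inner 𝕜 x (T x)) = ∑ i, a i * ‖inner 𝕜 (b i) x‖ ^ 2 := by
  rw [hT.inner_map_right, map_sum]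
  refine Finset.sum_congr rfl fun i _ => ?_
  rw [RCLike.re_ofReal_mul, inner_mul_symm_re_eq_norm, norm_mul, norm_inner_symm x, sq]

lemma re_trace (hT : IsEigenbasis T b a) : RCLike.re (T.trace 𝕜 E) = ∑ i, a i := by
  simp [T.trace_eq_sum_inner b, hT.inner_map_left]

end IsEigenbasis

lemma exists_isEigenbasis (b : OrthonormalBasis ι 𝕜 E) (a : ι → ℝ) :
    ∃ T : E →ₗ[𝕜] E, IsEigenbasis T b a :=
  ⟨b.toBasis.constr 𝕜 fun i => (a i : 𝕜) • b i, fun i => by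
    rw [← b.coe_toBasis, Module.Basis.constr_basis]⟩

lemma exists_isEigenbasis_antitone [LinearOrder ι] [FiniteDimensional 𝕜 E] {T : E →ₗ[𝕜] E}
    (hT : T.IsSymmetric) (hι : finrank 𝕜 E = Fintype.card ι) :
    ∃ (b : OrthonormalBasis ι 𝕜 E) (a : ι → ℝ), Antitone a ∧ IsEigenbasis T b a := by
  let e := Fintype.orderIsoFinOfCardEq ι rfl
  refine ⟨(hT.eigenvectorBasis hι).reindex e.toEquiv, hT.eigenvalues hι ∘ e.symm,
    (hT.eigenvalues_antitone hι).comp_monotone e.symm.monotone, fun i => ?_⟩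
  simp [hT.apply_eigenvectorBasis]

lemma exists_ne_zero_forall_inner_eq_zero [FiniteDimensional 𝕜 E] (v : κ → E)
    (hκ : Fintype.card κ < finrank 𝕜 E) : ∃ x ≠ 0, ∀ j, inner 𝕜 (v j) x = 0 := by
  let L : E →ₗ[𝕜] κ → 𝕜 := LinearMap.pi fun j => innerₛₗ 𝕜 (v j)
  have hL : LinearMap.ker L ≠ ⊥ := LinearMap.ker_ne_bot_of_finrank_lt (by simpa using hκ)
  obtain ⟨x, hx, hx0⟩ := (Submodule.ne_bot_iff _).mp hL
  exact ⟨x, hx0, congrFun hx⟩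

variable [LinearOrder ι]

/-- **Weyl's monotonicity principle**: a nonzero `x` orthogonal to `c i` for `i < k` and to `b i`
for `k < i` exists by dimension count, and on it the two forms are compared with `a k`, `d k`. -/
theorem IsEigenbasis.le_of_forall_re_inner_le {S T : E →ₗ[𝕜] E} {b c : OrthonormalBasis ι 𝕜 E}
    {a d : ι → ℝ} (hS : IsEigenbasis S b a) (hT : IsEigenbasis T c d) (ha : Antitone a)
    (hd : Antitone d) (h : ∀ x, RCLike.re (inner 𝕜 x (S x)) ≤ RCLike.re (inner 𝕜 x (T x))) :
    a ≤ d := by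
  intro k
  have := Module.Basis.finiteDimensional_of_finite b.toBasis
  obtain ⟨x, hx0, hx⟩ := exists_ne_zero_forall_inner_eq_zero (𝕜 := 𝕜)
    (fun i : {i // i ≠ k} => if i < k then c i else b i) (by
      rw [Module.finrank_eq_card_basis b.toBasis]
      exact Fintype.card_subtype_lt (x := k) (by simp))
  have hb (i : ι) (hi : k < i) : inner 𝕜 (b i) x = 0 := by simpa [hi.not_gt] using hx ⟨i, hi.ne'⟩
  have hc (i : ι) (hi : i < k) : inner 𝕜 (c i) x = 0 := by simpa [hi] using hx ⟨i, hi.ne⟩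
  have key : a k * ‖x‖ ^ 2 ≤ d k * ‖x‖ ^ 2 := calc
    a k * ‖x‖ ^ 2 = ∑ i, a k * ‖inner 𝕜 (b i) x‖ ^ 2 := by
      rw [← Finset.mul_sum, b.sum_sq_norm_inner_right]
    _ ≤ ∑ i, a i * ‖inner 𝕜 (b i) x‖ ^ 2 := Finset.sum_le_sum fun i _ => by
      rcases lt_or_ge k i with hi | hi
      · simp [hb i hi]
      · gcongr; exact ha hi
    _ = RCLike.re (inner 𝕜 x (S x)) := (hS.re_inner_map_self x).symm
    _ ≤ RCLike.re (inner 𝕜 x (T x)) := h x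
    _ = ∑ i, d i * ‖inner 𝕜 (c i) x‖ ^ 2 := hT.re_inner_map_self x
    _ ≤ ∑ i, d k * ‖inner 𝕜 (c i) x‖ ^ 2 := Finset.sum_le_sum fun i _ => by
      rcases lt_or_ge i k with hi | hi
      · simp [hc i hi]
      · gcongr; exact hd hi
    _ = d k * ‖x‖ ^ 2 := by rw [← Finset.mul_sum, c.sum_sq_norm_inner_right]
  exact le_of_mul_le_mul_right key (by positivity)

/-- **Lidskii–Mirsky inequality**: `Y + (X - Y)⁺` dominates both `X` and `Y`, and its trace exceeds
that of `Y` by the sum on the right. -/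
theorem IsEigenbasis.sum_posPart_sub_le {X Y : E →ₗ[𝕜] E} {b c : OrthonormalBasis ι 𝕜 E}
    {g : OrthonormalBasis κ 𝕜 E} {x y : ι → ℝ} {z : κ → ℝ} (hX : IsEigenbasis X b x)
    (hY : IsEigenbasis Y c y) (hx : Antitone x) (hy : Antitone y)
    (hZ : IsEigenbasis (X - Y) g z) : ∑ i, (x i - y i)⁺ ≤ ∑ i, (z i)⁺ := by
  have := Module.Basis.finiteDimensional_of_finite b.toBasis
  obtain ⟨P, hP⟩ := exists_isEigenbasis g fun i => (z i)⁺
  obtain ⟨f, t, ht, hT⟩ := exists_isEigenbasis_antitone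
    (hY.isSymmetric.add hP.isSymmetric) (Module.finrank_eq_card_basis b.toBasis)
  have hyt : y ≤ t := hY.le_of_forall_re_inner_le hT hy ht fun v => by
    simp only [LinearMap.add_apply, inner_add_right, map_add, le_add_iff_nonneg_right,
      hP.re_inner_map_self]
    positivity
  have hxt : x ≤ t := hX.le_of_forall_re_inner_le hT hx ht fun v => by
    have hle : ∑ i, z i * ‖inner 𝕜 (g i) v‖ ^ 2 ≤ ∑ i, (z i)⁺ * ‖inner 𝕜 (g i) v‖ ^ 2 := by
      gcongr; exact le_posPart _
    rw [← hZ.re_inner_map_self, ← hP.re_inner_map_self, LinearMap.sub_apply, inner_sub_right,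
      map_sub] at hle
    rw [LinearMap.add_apply, inner_add_right, map_add]
    linarith
  calc ∑ i, (x i - y i)⁺ ≤ ∑ i, (t i - y i) := Finset.sum_le_sum fun i _ =>
        sup_le (sub_le_sub_right (hxt i) _) (sub_nonneg.2 (hyt i))
    _ = ∑ i, (z i)⁺ := by
        rw [Finset.sum_sub_distrib, ← hT.re_trace, ← hY.re_trace, ← hP.re_trace, map_add, map_add]
        ring

end Eigenbasis

section SingularValues

variable {𝕜 E F : Type*} [RCLike 𝕜] [NormedAddCommGroup E] [InnerProductSpace 𝕜 E]
  [NormedAddCommGroup F] [InnerProductSpace 𝕜 F] {n : ℕ}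

/-- The vector `(u i, ε v i) / √2`. For singular bases `u`, `v` of `T` and `ε = ±1` these are the
eigenvectors of the dilation of `T`. -/
def signedPair {ι : Type*} (u : ι → E) (v : ι → F) (ε : ℝ) (i : ι) : WithLp 2 (E × F) :=
  ((√2 : ℝ) : 𝕜)⁻¹ • WithLp.toLp 2 (u i, (ε : 𝕜) • v i)

lemma inner_signedPair {ι : Type*} [DecidableEq ι] {u : ι → E} {v : ι → F}
    (hu : Orthonormal 𝕜 u) (hv : Orthonormal 𝕜 v) (ε η : ℝ) (i j : ι) :
    inner 𝕜 (signedPair (𝕜 := 𝕜) u v ε i) (signedPair (𝕜 := 𝕜) u v η j) =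
      if i = j then (((1 + ε * η) / 2 : ℝ) : 𝕜) else 0 := by
  have h2 : ((√2 : ℝ) : 𝕜) * ((√2 : ℝ) : 𝕜) = 2 := by
    rw [← RCLike.ofReal_mul, Real.mul_self_sqrt zero_le_two, RCLike.ofReal_ofNat]
  simp only [signedPair, inner_smul_left, inner_smul_right, WithLp.prod_inner_apply,
    orthonormal_iff_ite.1 hu, orthonormal_iff_ite.1 hv, map_inv₀, RCLike.conj_ofReal, ← mul_assoc,
    ← mul_inv, h2]
  split_ifs
  · push_cast; ring
  · simp

/-- The family `s 0, s 1, …, -s 1, -s 0`, indexed so that it is antitone when `s` is antitone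
and nonnegative. -/
def signedDouble (s : Fin n → ℝ) (k : Fin n ⊕ₗ (Fin n)ᵒᵈ) : ℝ :=
  Sum.elim s (fun i => -s (OrderDual.ofDual i)) (ofLex k)

lemma signedDouble_antitone {s : Fin n → ℝ} (hs : Antitone s) (h0 : 0 ≤ s) :
    Antitone (signedDouble s) := by
  intro k l hkl
  rcases k with i | i <;> rcases l with j | j
  · exact hs (Sum.Lex.inl_le_inl_iff.1 hkl)
  · exact (neg_nonpos.2 (h0 _)).trans (h0 i)
  · exact absurd hkl Sum.Lex.not_inr_le_inl
  · exact neg_le_neg (hs (OrderDual.ofDual_le_ofDual.2 (Sum.Lex.inr_le_inr_iff.1 hkl)))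

lemma sum_posPart_signedDouble_sub (s t : Fin n → ℝ) :
    ∑ k, (signedDouble s k - signedDouble t k)⁺ = ∑ i, |s i - t i| := by
  have h : ∑ k : Fin n ⊕ₗ (Fin n)ᵒᵈ, (signedDouble s k - signedDouble t k)⁺ =
      ∑ i, (s i - t i)⁺ + ∑ i, (-s i - -t i)⁺ := Fintype.sum_sum_type _
  rw [h, ← Finset.sum_add_distrib]
  refine Finset.sum_congr rfl fun i _ => ?_
  rw [← posPart_add_negPart, ← posPart_neg]
  congr 2; ring

lemma sum_posPart_signedDouble {s : Fin n → ℝ} (hs : 0 ≤ s) :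
    ∑ k, (signedDouble s k)⁺ = ∑ i, s i := by
  have h0 : ∀ k, signedDouble (0 : Fin n → ℝ) k = 0 :=
    toLex.surjective.forall.2 (by simp [signedDouble])
  have h := sum_posPart_signedDouble_sub s 0
  simpa only [h0, sub_zero, Pi.zero_apply, abs_of_nonneg (hs _)] using h

variable [FiniteDimensional 𝕜 E] [FiniteDimensional 𝕜 F]

theorem exists_singularValueDecomposition (T : E →ₗ[𝕜] F) (hE : finrank 𝕜 E = n)
    (hF : finrank 𝕜 F = n) :
    ∃ (u : OrthonormalBasis (Fin n) 𝕜 E) (v : OrthonormalBasis (Fin n) 𝕜 F),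
      ∀ i, T (u i) = (T.singularValues i : 𝕜) • v i := by
  let u := T.isSymmetric_adjoint_comp_self.eigenvectorBasis hE
  have hTu (i j : Fin n) : inner 𝕜 (T (u i)) (T (u j)) =
      if i = j then (T.singularValues i : 𝕜) ^ 2 else 0 := by
    have hj : T.adjoint (T (u j)) = ((T.singularValues j ^ 2 : ℝ) : 𝕜) • u j := by
      rw [T.sq_singularValues_fin hE]
      exact T.isSymmetric_adjoint_comp_self.apply_eigenvectorBasis hE j
    rw [← LinearMap.adjoint_inner_right, hj, inner_smul_right, u.inner_eq_ite]
    split_ifs with hij <;> simp [hij]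
  let w (i : Fin n) : F := (T.singularValues i : 𝕜)⁻¹ • T (u i)
  have hw : Orthonormal 𝕜 ({i : Fin n | T.singularValues i ≠ 0}.domRestrict w) := by
    rw [orthonormal_iff_ite]
    rintro ⟨i, hi⟩ ⟨j, hj⟩
    have hi' : (T.singularValues i : 𝕜) ≠ 0 := RCLike.ofReal_ne_zero.2 hi
    simp only [Set.domRestrict_apply, w, inner_smul_left, inner_smul_right, hTu, Subtype.mk.injEq,
      map_inv₀, RCLike.conj_ofReal]
    split_ifs with hij
    · subst hij; field_simp
    · simp
  obtain ⟨v, hv⟩ := hw.exists_orthonormalBasis_extension_of_card_eq (by simpa using hF)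
  refine ⟨u, v, fun i => ?_⟩
  by_cases hi : T.singularValues i = 0
  · simpa [hi] using hTu i i
  · rw [hv i hi, smul_inv_smul₀ (RCLike.ofReal_ne_zero.2 hi)]

lemma adjoint_apply_of_singular_bases {ι : Type*} [Fintype ι] {T : E →ₗ[𝕜] F}
    {u : OrthonormalBasis ι 𝕜 E} {v : OrthonormalBasis ι 𝕜 F} {s : ι → ℝ}
    (h : ∀ i, T (u i) = (s i : 𝕜) • v i) (i : ι) : T.adjoint (v i) = (s i : 𝕜) • u i := by
  classical
  refine InnerProductSpace.ext_inner_left_basis u.toBasis fun j => ?_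
  rw [u.coe_toBasis, LinearMap.adjoint_inner_right, h, inner_smul_left, inner_smul_right,
    u.inner_eq_ite, v.inner_eq_ite]
  split_ifs with hij <;> simp [hij]

lemma singularValues_neg (T : E →ₗ[𝕜] F) : (-T).singularValues = T.singularValues := by
  have h : (-T).adjoint ∘ₗ (-T) = T.adjoint ∘ₗ T := by
    rw [map_neg, LinearMap.neg_comp, LinearMap.comp_neg, neg_neg]
  simp only [LinearMap.singularValues, h]

/-- The self-adjoint dilation `(x, y) ↦ (T⋆ y, T x)` of `T`, whose eigenvalues are the singular
values of `T` and their negatives. -/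
def dilation (T : E →ₗ[𝕜] F) : WithLp 2 (E × F) →ₗ[𝕜] WithLp 2 (E × F) :=
  (WithLp.linearEquiv 2 𝕜 (E × F)).symm.conj
    ((T.adjoint ∘ₗ LinearMap.snd 𝕜 E F).prod (T ∘ₗ LinearMap.fst 𝕜 E F))

lemma dilation_toLp (T : E →ₗ[𝕜] F) (x : E) (y : F) :
    dilation T (WithLp.toLp 2 (x, y)) = WithLp.toLp 2 (T.adjoint y, T x) := rfl

lemma dilation_sub (S T : E →ₗ[𝕜] F) : dilation (S - T) = dilation S - dilation T := by
  ext x : 1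
  change WithLp.toLp 2 ((S - T).adjoint x.snd, (S - T) x.fst) =
    WithLp.toLp 2 (S.adjoint x.snd - T.adjoint x.snd, S x.fst - T x.fst)
  rw [map_sub, LinearMap.sub_apply, LinearMap.sub_apply]

lemma dilation_signedPair {ι : Type*} [Fintype ι] {T : E →ₗ[𝕜] F} {u : OrthonormalBasis ι 𝕜 E}
    {v : OrthonormalBasis ι 𝕜 F} {s : ι → ℝ} (h : ∀ i, T (u i) = (s i : 𝕜) • v i) {ε : ℝ}
    (hε : ε * ε = 1) (i : ι) :
    dilation T (signedPair (𝕜 := 𝕜) u v ε i) =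
      ((ε * s i : ℝ) : 𝕜) • signedPair (𝕜 := 𝕜) u v ε i := by
  have hε' : (ε : 𝕜) * (ε : 𝕜) = 1 := by rw [← RCLike.ofReal_mul, hε, RCLike.ofReal_one]
  rw [signedPair, map_smul, dilation_toLp, map_smul, adjoint_apply_of_singular_bases h, h,
    smul_comm _ (√2 : 𝕜)⁻¹]
  congr 1
  rw [← WithLp.toLp_smul, Prod.smul_mk, smul_smul, smul_smul, RCLike.ofReal_mul, mul_right_comm,
    hε', one_mul]

lemma exists_isEigenbasis_dilation (T : E →ₗ[𝕜] F) (hE : finrank 𝕜 E = n)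
    (hF : finrank 𝕜 F = n) :
    ∃ b : OrthonormalBasis (Fin n ⊕ₗ (Fin n)ᵒᵈ) 𝕜 (WithLp 2 (E × F)),
      IsEigenbasis (dilation T) b (signedDouble fun i => T.singularValues i) := by
  obtain ⟨u, v, huv⟩ := exists_singularValueDecomposition T hE hF
  let w : Fin n ⊕ (Fin n)ᵒᵈ → WithLp 2 (E × F) :=
    Sum.elim (signedPair (𝕜 := 𝕜) u v 1)
      (fun i => signedPair (𝕜 := 𝕜) u v (-1) (OrderDual.ofDual i))
  have hw : Orthonormal 𝕜 w := by
    rw [orthonormal_iff_ite]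
    rintro (i | i) (j | j) <;> simp [w, inner_signedPair u.orthonormal v.orthonormal]
  have hdim : finrank 𝕜 (WithLp 2 (E × F)) = Fintype.card (Fin n ⊕ (Fin n)ᵒᵈ) := by
    rw [(WithLp.linearEquiv 2 𝕜 (E × F)).finrank_eq]
    simp [hE, hF]
  obtain ⟨b, hb⟩ := Orthonormal.exists_orthonormalBasis_extension_of_card_eq hdim (v := w)
    (s := univ) (hw.comp _ Subtype.val_injective)
  refine ⟨b.reindex toLex, toLex.surjective.forall.2 ?_⟩
  rintro (i | i)
  · simpa [hb, w, signedDouble] using dilation_signedPair huv (one_mul 1) i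
  · simpa [hb, w, signedDouble] using
      dilation_signedPair huv (show (-1 : ℝ) * -1 = 1 by norm_num) (OrderDual.ofDual i)

/-- **Mirsky's inequality** for the trace norm. -/
theorem sum_abs_singularValues_sub_le (A B : E →ₗ[𝕜] F) (hE : finrank 𝕜 E = n)
    (hF : finrank 𝕜 F = n) :
    ∑ i : Fin n, |A.singularValues i - B.singularValues i| ≤
      ∑ i : Fin n, (A - B).singularValues i := by
  obtain ⟨a, ha⟩ := exists_isEigenbasis_dilation A hE hF
  obtain ⟨b, hb⟩ := exists_isEigenbasis_dilation B hE hF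
  obtain ⟨c, hc⟩ := exists_isEigenbasis_dilation (A - B) hE hF
  have anti (T : E →ₗ[𝕜] F) : Antitone (signedDouble fun i : Fin n => T.singularValues i) :=
    signedDouble_antitone (fun _ _ hij => T.singularValues_antitone hij)
      fun i => T.singularValues_nonneg i
  rw [dilation_sub] at hc
  have h := ha.sum_posPart_sub_le hb (anti A) (anti B) hc
  rw [sum_posPart_signedDouble_sub] at h
  exact h.trans_eq (sum_posPart_signedDouble fun i => LinearMap.singularValues_nonneg _ _)

theorem sum_compl_singularValues_le {X Z : E →ₗ[𝕜] F} (hE : finrank 𝕜 E = n)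
    (hF : finrank 𝕜 F = n) {T : Finset (Fin n)} (hX : ∀ i ∉ T, X.singularValues i = 0)
    (hXZ : ∑ i : Fin n, (X + Z).singularValues i ≤ ∑ i : Fin n, X.singularValues i) :
    ∑ i ∈ Tᶜ, Z.singularValues i ≤ ∑ i ∈ T, Z.singularValues i := by
  have mirsky := sum_abs_singularValues_sub_le X (-Z) hE hF
  rw [singularValues_neg, sub_neg_eq_add, ← Finset.sum_add_sum_compl T] at mirsky
  have on_T : ∑ i ∈ T, (X.singularValues i - Z.singularValues i) ≤
      ∑ i ∈ T, |X.singularValues i - Z.singularValues i| :=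
    Finset.sum_le_sum fun i _ => le_abs_self _
  have off_T : ∑ i ∈ Tᶜ, Z.singularValues i =
      ∑ i ∈ Tᶜ, |X.singularValues i - Z.singularValues i| :=
    Finset.sum_congr rfl fun i hi => by
      rw [hX i (Finset.mem_compl.1 hi), zero_sub, abs_neg,
        abs_of_nonneg (Z.singularValues_nonneg _)]
  have sum_X : ∑ i ∈ T, X.singularValues i = ∑ i : Fin n, X.singularValues i :=
    Finset.sum_subset (Finset.subset_univ T) fun i _ => hX i
  rw [Finset.sum_sub_distrib] at on_T
  linarith

end SingularValues

section CappedSimplex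

variable {ι : Type*} {k : ℕ} {w : ι → ℝ}

/-- The condition `τ * k ≤ τ * R.card` says that `R` has `k` elements unless `τ = 0`. -/
lemma exists_card_le_threshold [Finite ι] (k : ℕ) (y : ι → ℝ) :
    ∃ R : Finset ι, R.card ≤ k ∧ ∃ τ : ℝ, 0 ≤ τ ∧ τ * k ≤ τ * R.card ∧
      (∀ j ∈ R, τ ≤ y j) ∧ ∀ i ∉ R, y i ≤ τ := by
  have := Fintype.ofFinite ι
  obtain ⟨R, hR, hmax⟩ := Finset.exists_max_image {R : Finset ι | R.card ≤ k}
    (fun R => ∑ i ∈ R, y i) ⟨∅, by simp⟩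
  simp only [Finset.mem_filter, Finset.mem_univ, true_and] at hR hmax
  have drop (j) (hj : j ∈ R) : 0 ≤ y j := by
    have := hmax (R.erase j) ((Finset.card_erase_le).trans hR)
    rw [← Finset.add_sum_erase R y hj] at this
    linarith
  have nonpos_of_card_lt (hlt : R.card < k) (i) (hi : i ∉ R) : y i ≤ 0 := by
    have := hmax (insert i R) ((Finset.card_insert_le i R).trans hlt)
    rw [Finset.sum_insert hi] at this
    linarith
  have swap (i) (hi : i ∉ R) (j) (hj : j ∈ R) : y i ≤ y j := by
    have := hmax (insert i (R.erase j))
      ((Finset.card_insert_le i _).trans ((Finset.card_erase_add_one hj).trans_le hR))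
    rw [Finset.sum_insert (fun h => hi (Finset.mem_of_mem_erase h)),
      ← Finset.add_sum_erase R y hj] at this
    linarith
  refine ⟨R, hR, ?_⟩
  by_cases hneg : ∀ i ∉ R, y i ≤ 0
  · exact ⟨0, le_rfl, by simp, drop, hneg⟩
  · have hcard : k ≤ R.card := not_lt.1 fun hlt => hneg (nonpos_of_card_lt hlt)
    push Not at hneg
    obtain ⟨i, hi, hyi⟩ := hneg
    obtain ⟨m, hm, hm_max⟩ := Finset.exists_max_image Rᶜ y ⟨i, Finset.mem_compl.2 hi⟩
    have hm0 : 0 ≤ y m := hyi.le.trans (hm_max i (Finset.mem_compl.2 hi))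
    exact ⟨y m, hm0, by gcongr, swap m (Finset.mem_compl.1 hm),
      fun i hi => hm_max i (Finset.mem_compl.2 hi)⟩

variable [Fintype ι]

lemma exists_card_le_sum_mul_le_sum (hw0 : 0 ≤ w) (hw1 : w ≤ 1) (hk : ∑ i, w i ≤ k)
    (y : ι → ℝ) : ∃ R : Finset ι, R.card ≤ k ∧ ∑ i, w i * y i ≤ ∑ i ∈ R, y i := by
  obtain ⟨R, hR, τ, hτ0, hτk, hτ_le, hle_τ⟩ := exists_card_le_threshold k y
  refine ⟨R, hR, ?_⟩
  have on_R : ∑ i ∈ R, w i * (y i - τ) ≤ ∑ i ∈ R, (y i - τ) := Finset.sum_le_sum fun i hi =>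
    mul_le_of_le_one_left (sub_nonneg.2 (hτ_le i hi)) (hw1 i)
  have off_R : ∑ i ∈ Rᶜ, w i * (y i - τ) ≤ 0 := Finset.sum_nonpos fun i hi =>
    mul_nonpos_of_nonneg_of_nonpos (hw0 i) (sub_nonpos.2 (hle_τ i (Finset.mem_compl.1 hi)))
  calc ∑ i, w i * y i = ∑ i, w i * (y i - τ) + τ * ∑ i, w i := by
        rw [Finset.mul_sum, ← Finset.sum_add_distrib]
        exact Finset.sum_congr rfl fun i _ => by ring
    _ ≤ ∑ i ∈ R, (y i - τ) + τ * R.card := by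
        rw [← Finset.sum_add_sum_compl R]
        linarith [mul_le_mul_of_nonneg_left hk hτ0]
    _ = ∑ i ∈ R, y i := by
        rw [Finset.sum_sub_distrib, Finset.sum_const, nsmul_eq_mul]; ring

lemma mem_convexHull_indicator (hw0 : 0 ≤ w) (hw1 : w ≤ 1) (hk : ∑ i, w i ≤ k) :
    w ∈ convexHull ℝ
      ((fun R : Finset ι => (R : Set ι).indicator (1 : ι → ℝ)) '' {R | R.card ≤ k}) := by
  by_contra hw
  obtain ⟨f, u, hf, huw⟩ := geometric_hahn_banach_closed_point (convex_convexHull ℝ _)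
    ((Set.toFinite _).isClosed_convexHull (𝕜 := ℝ)) hw
  obtain ⟨R, hR, hle⟩ := exists_card_le_sum_mul_le_sum hw0 hw1 hk
    fun i => f fun j => if i = j then 1 else 0
  have hfR := hf _ (subset_convexHull ℝ _ ⟨R, hR, rfl⟩)
  rw [← ContinuousLinearMap.coe_coe, LinearMap.pi_apply_eq_sum_univ] at huw hfR
  simp only [Set.indicator_apply, Finset.mem_coe, Pi.one_apply, smul_eq_mul,
    ContinuousLinearMap.coe_coe, ite_mul, one_mul, zero_mul,
    Finset.sum_ite_mem, Finset.univ_inter] at hfR huw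
  linarith

end CappedSimplex

section AtomicNorm

variable {H : Type*} [NormedAddCommGroup H] [NormedSpace ℝ H] {S : Set H}

lemma ofReal_norm_le_sigmaNorm (S : Set H) (x : H) : ENNReal.ofReal ‖x‖ ≤ sigmaNorm S x := by
  refine le_sInf ?_
  rintro _ ⟨r, hr, rfl, y, hy, rfl⟩
  have hball : closure (convexHull ℝ (S ∩ {u : H | ‖u‖ = 1})) ⊆ Metric.closedBall 0 1 :=
    closure_minimal (convexHull_min (fun u hu => by simpa using hu.2.le) (convex_closedBall 0 1))
      Metric.isClosed_closedBall
  refine ENNReal.ofReal_le_ofReal ?_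
  rw [norm_smul, Real.norm_of_nonneg hr]
  exact mul_le_of_le_one_right hr (by simpa using hball hy)

lemma norm_le_toReal_sigmaNorm {x : H} (hx : sigmaNorm S x ≠ ⊤) :
    ‖x‖ ≤ (sigmaNorm S x).toReal :=
  (ENNReal.ofReal_le_iff_le_toReal hx).1 (ofReal_norm_le_sigmaNorm S x)

lemma sigmaNorm_le_of_mem_convexHull (hS : ∀ (c : ℝ), ∀ x ∈ S, c • x ∈ S) {u : H} (hu : u ∈ S)
    (hu0 : u ≠ 0) {t : ℝ} (ht : 0 < t) {x : H}
    (hx : x ∈ convexHull ℝ (S ∩ Metric.closedBall 0 t)) : sigmaNorm S x ≤ ENNReal.ofReal t := by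
  suffices hsub : S ∩ Metric.closedBall 0 t ⊆ t • convexHull ℝ (S ∩ {u : H | ‖u‖ = 1}) from
    sInf_le ⟨t, ht.le, rfl, smul_set_mono subset_closure
      (convexHull_min hsub ((convex_convexHull ℝ _).smul t) hx)⟩
  rintro y ⟨hyS, hyt⟩
  have normalize {v : H} (hv : v ∈ S) (hv0 : v ≠ 0) : ‖v‖⁻¹ • v ∈ S ∩ {u : H | ‖u‖ = 1} :=
    ⟨hS _ v hv, norm_smul_inv_norm hv0⟩
  obtain ⟨v, hv, hyv⟩ : ∃ v ∈ S ∩ {u : H | ‖u‖ = 1}, y = ‖y‖ • v := by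
    rcases eq_or_ne y 0 with rfl | hy0
    · exact ⟨_, normalize hu hu0, by simp⟩
    · exact ⟨_, normalize hyS hy0, (smul_inv_smul₀ (norm_ne_zero_iff.2 hy0) y).symm⟩
  have hnv : -v ∈ S ∩ {u : H | ‖u‖ = 1} := ⟨by simpa using hS (-1) v hv.1, by simpa using hv.2⟩
  have hyt' : ‖y‖ / t ≤ 1 := (div_le_one ht).2 (by simpa using hyt)
  refine ⟨(‖y‖ / t) • v, ?_, ?_⟩
  · have hpos : 0 ≤ ‖y‖ / t := by positivity
    convert (convex_convexHull ℝ (S ∩ {u : H | ‖u‖ = 1})) (subset_convexHull ℝ _ hv)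
      (subset_convexHull ℝ _ hnv) (a := (1 + ‖y‖ / t) / 2) (b := (1 - ‖y‖ / t) / 2) (by linarith)
      (by linarith) (by ring) using 1
    module
  · change t • (‖y‖ / t) • v = y
    rw [smul_smul, mul_div_cancel₀ _ ht.ne', ← hyv]

end AtomicNorm

section DeltaSigma

variable {𝕜 H : Type*} [RCLike 𝕜] [NormedAddCommGroup H] [InnerProductSpace 𝕜 H]
  [NormedSpace ℝ H] {S : Set H} {x z : H}

lemma sq_norm_le_sq_sigmaNorm_sub (h : sigmaNorm S (x + z) ≠ ⊤) :
    ‖z‖ ^ 2 ≤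
      (sigmaNorm S (x + z)).toReal ^ 2 - ‖x‖ ^ 2 - 2 * RCLike.re (inner 𝕜 x z : 𝕜) := by
  have hsq : ‖x + z‖ ^ 2 ≤ (sigmaNorm S (x + z)).toReal ^ 2 := by
    gcongr; exact norm_le_toReal_sigmaNorm h
  rw [norm_add_sq (𝕜 := 𝕜)] at hsq
  linarith

lemma deltaXZ_le_one (S : Set H) (x z : H) : deltaXZ 𝕜 S x z ≤ 1 := by
  rw [deltaXZ]
  split_ifs with h
  · exact zero_le_one
  · refine div_le_one_of_le₀ ?_ (by positivity)
    calc -RCLike.re (inner 𝕜 x z) ≤ ‖inner 𝕜 x z‖ :=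
          (neg_le_abs _).trans (RCLike.abs_re_le_norm _)
      _ ≤ ‖x‖ * ‖z‖ := norm_inner_le_norm x z
      _ ≤ _ := by gcongr; exact Real.le_sqrt_of_sq_le (sq_norm_le_sq_sigmaNorm_sub h)

lemma deltaAdmissible_of_ne_zero (hx : x ∈ S) (hx0 : x ≠ 0) (hz0 : z ≠ 0) :
    deltaAdmissible 𝕜 S z x := by
  refine ⟨hx, hx0, or_iff_not_imp_left.2 fun h => ?_⟩
  exact (by positivity : 0 < ‖z‖ ^ 2).trans_le (sq_norm_le_sq_sigmaNorm_sub h)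

lemma one_div_sqrt_two_le_deltaXZ (hx0 : x ≠ 0) (hxz : inner 𝕜 x z = -(‖x‖ : 𝕜) ^ 2)
    (h : sigmaNorm S (x + z) ≤ ENNReal.ofReal ‖x‖) : 1 / √2 ≤ deltaXZ 𝕜 S x z := by
  have hre : RCLike.re (inner 𝕜 x z) = -‖x‖ ^ 2 := by
    rw [hxz, ← RCLike.ofReal_pow, map_neg, RCLike.ofReal_re]
  have htop : sigmaNorm S (x + z) ≠ ⊤ := (h.trans_lt ENNReal.ofReal_lt_top).ne
  have hσ : (sigmaNorm S (x + z)).toReal ≤ ‖x‖ := ENNReal.toReal_le_of_le_ofReal (norm_nonneg x) h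
  have hx : 0 < ‖x‖ := norm_pos_iff.2 hx0
  rw [deltaXZ, if_neg htop, hre, neg_neg,
    show (sigmaNorm S (x + z)).toReal ^ 2 - ‖x‖ ^ 2 - 2 * -‖x‖ ^ 2 =
      (sigmaNorm S (x + z)).toReal ^ 2 + ‖x‖ ^ 2 by ring]
  calc 1 / √2 = ‖x‖ ^ 2 / (‖x‖ * √(‖x‖ ^ 2 + ‖x‖ ^ 2)) := by
        rw [← two_mul, Real.sqrt_mul zero_le_two, Real.sqrt_sq hx.le]; field_simp
    _ ≤ _ := by gcongr

lemma le_deltaSigma {f : H → ℝ≥0∞} {c : ℝ} (hne : ∃ z ∈ descentSet S f, z ≠ 0)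
    (h : ∀ z ∈ descentSet S f, z ≠ 0 → ∃ x ∈ S, x ≠ 0 ∧ c ≤ deltaXZ 𝕜 S x z) :
    c ≤ deltaSigma 𝕜 S f := by
  obtain ⟨z₀, hz₀, hz₀0⟩ := hne
  refine le_csInf ⟨_, z₀, hz₀, hz₀0, rfl⟩ ?_
  rintro _ ⟨z, hz, hz0, rfl⟩
  obtain ⟨x, hx, hx0, hc⟩ := h z hz hz0
  refine hc.trans (le_csSup ⟨1, ?_⟩ ⟨x, deltaAdmissible_of_ne_zero hx hx0 hz0, rfl⟩)
  rintro _ ⟨y, -, rfl⟩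
  exact deltaXZ_le_one S y z

end DeltaSigma

section OrthonormalExpansion

variable {ι H : Type*} [NormedAddCommGroup H] [InnerProductSpace ℝ H] {S : Set H} {e : ι → H}

lemma sq_norm_sum_smul (he : Orthonormal ℝ e) (R : Finset ι) (c : ι → ℝ) :
    ‖∑ i ∈ R, c i • e i‖ ^ 2 = ∑ i ∈ R, c i ^ 2 := by
  rw [← real_inner_self_eq_norm_sq, he.inner_sum]
  simp [sq]

lemma sum_le_sqrt_card_mul_norm_sum_smul (he : Orthonormal ℝ e) (T : Finset ι) (s : ι → ℝ) :
    ∑ i ∈ T, s i ≤ √T.card * ‖∑ i ∈ T, s i • e i‖ := by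
  refine le_of_sq_le_sq ?_ (by positivity)
  rw [mul_pow, Real.sq_sqrt (by positivity), sq_norm_sum_smul he]
  exact sq_sum_le_card_mul_sum_sq

variable [Fintype ι]

lemma smul_sum_mem_convexHull (he : Orthonormal ℝ e) {k : ℕ}
    (hSe : ∀ R : Finset ι, R.card ≤ k → ∀ c : ι → ℝ, ∑ i ∈ R, c i • e i ∈ S) {w : ι → ℝ}
    (hw0 : 0 ≤ w) (hw1 : w ≤ 1) (hk : ∑ i, w i ≤ k) {α : ℝ} (hα : 0 ≤ α) :
    α • ∑ i, w i • e i ∈ convexHull ℝ (S ∩ Metric.closedBall 0 (α * √k)) := by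
  let L : (ι → ℝ) →ₗ[ℝ] H := α • Fintype.linearCombination ℝ e
  have hw : L w ∈ L '' _ := mem_image_of_mem L (mem_convexHull_indicator hw0 hw1 hk)
  rw [L.image_convexHull] at hw
  refine convexHull_mono ?_ hw
  rintro _ ⟨_, ⟨R, hR : R.card ≤ k, rfl⟩, rfl⟩
  have hLR : L ((R : Set ι).indicator 1) = ∑ i ∈ R, α • e i := by
    simp [L, Fintype.linearCombination_apply, Set.indicator_apply, Finset.smul_sum]
  rw [hLR, mem_inter_iff, mem_closedBall_zero_iff]
  refine ⟨hSe R hR fun _ => α, (sq_le_sq₀ (by positivity) (by positivity)).1 ?_⟩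
  rw [sq_norm_sum_smul he, Finset.sum_const, nsmul_eq_mul, mul_pow, Real.sq_sqrt (by positivity),
    mul_comm]
  gcongr

variable [DecidableEq ι] {T : Finset ι} {s : ι → ℝ}

lemma sum_compl_smul_mem_convexHull (he : Orthonormal ℝ e)
    (hSe : ∀ R : Finset ι, R.card ≤ T.card → ∀ c : ι → ℝ, ∑ i ∈ R, c i • e i ∈ S)
    (hs : 0 ≤ s) (hT : ∀ i ∉ T, ∀ j ∈ T, s i ≤ s j) (hle : ∑ i ∈ Tᶜ, s i ≤ ∑ i ∈ T, s i)
    (hpos : 0 < ∑ i ∈ T, s i) :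
    ∑ i ∈ Tᶜ, s i • e i ∈
      convexHull ℝ (S ∩ Metric.closedBall 0 ‖∑ i ∈ T, s i • e i‖) := by
  have hcard : (0 : ℝ) < T.card := by
    exact_mod_cast (Finset.nonempty_of_sum_ne_zero hpos.ne').card_pos
  let α : ℝ := (∑ i ∈ T, s i) / T.card
  have hα : 0 < α := div_pos hpos hcard
  have hαnorm : α * √T.card ≤ ‖∑ i ∈ T, s i • e i‖ := by
    rw [div_mul_eq_mul_div, div_le_iff₀' hcard]
    calc (∑ i ∈ T, s i) * √T.card ≤ √T.card * ‖∑ i ∈ T, s i • e i‖ * √T.card := by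
          gcongr; exact sum_le_sqrt_card_mul_norm_sum_smul he T s
      _ = T.card * ‖∑ i ∈ T, s i • e i‖ := by
          rw [mul_right_comm, Real.mul_self_sqrt hcard.le]
  let w (i : ι) : ℝ := if i ∈ Tᶜ then s i / α else 0
  have hw0 : 0 ≤ w := fun i => ite_nonneg (div_nonneg (hs i) hα.le) le_rfl
  have hw1 : w ≤ 1 := fun i => by
    dsimp only [w]
    split_ifs with hi
    · rw [Pi.one_apply, div_le_one hα, le_div_iff₀' hcard, ← nsmul_eq_mul]
      exact T.card_nsmul_le_sum s (s i) (hT i (Finset.mem_compl.1 hi))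
    · exact zero_le_one
  have hwk : ∑ i, w i ≤ T.card := by
    rw [Finset.sum_ite_mem, Finset.univ_inter, ← Finset.sum_div, div_le_iff₀ hα,
      mul_div_cancel₀ _ hcard.ne']
    exact hle
  have hsum : ∑ i ∈ Tᶜ, s i • e i = α • ∑ i, w i • e i := by
    simp only [w, ite_smul, zero_smul, Finset.sum_ite_mem, Finset.univ_inter, Finset.smul_sum,
      smul_smul, mul_div_cancel₀ _ hα.ne']
  rw [hsum]
  exact convexHull_mono (inter_subset_inter_right S (Metric.closedBall_subset_closedBall hαnorm))
    (smul_sum_mem_convexHull he hSe hw0 hw1 hwk hα.le)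

theorem exists_one_div_sqrt_two_le_deltaXZ (he : Orthonormal ℝ e)
    (hS : ∀ (c : ℝ), ∀ x ∈ S, c • x ∈ S)
    (hSe : ∀ R : Finset ι, R.card ≤ T.card → ∀ c : ι → ℝ, ∑ i ∈ R, c i • e i ∈ S)
    (hs : 0 ≤ s) (hs0 : s ≠ 0) (hT : ∀ i ∉ T, ∀ j ∈ T, s i ≤ s j)
    (hle : ∑ i ∈ Tᶜ, s i ≤ ∑ i ∈ T, s i) :
    ∃ x ∈ S, x ≠ 0 ∧ 1 / √2 ≤ deltaXZ ℝ S x (∑ i, s i • e i) := by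
  have hpos : 0 < ∑ i ∈ T, s i := by
    have hsum : 0 < ∑ i, s i := Fintype.sum_pos (lt_of_le_of_ne hs hs0.symm)
    rw [← Finset.sum_add_sum_compl T] at hsum
    linarith
  set head := ∑ i ∈ T, s i • e i with head_def
  have head_mem : head ∈ S := hSe T le_rfl s
  have head_ne : head ≠ 0 := by
    intro h
    have hle_norm := sum_le_sqrt_card_mul_norm_sum_smul he T s
    rw [← head_def, h, norm_zero, mul_zero] at hle_norm
    exact hle_norm.not_gt hpos
  have hinner : inner ℝ (-head) (∑ i, s i • e i) = -‖head‖ ^ 2 := by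
    rw [head_def, sq_norm_sum_smul he, inner_neg_left, sum_inner]
    simp [inner_smul_left, he.inner_right_fintype, sq]
  have hadd : -head + ∑ i, s i • e i = ∑ i ∈ Tᶜ, s i • e i := by
    rw [head_def, ← Finset.sum_add_sum_compl T, neg_add_cancel_left]
  refine ⟨-head, by simpa using hS (-1) head head_mem, neg_ne_zero.2 head_ne,
    one_div_sqrt_two_le_deltaXZ (neg_ne_zero.2 head_ne) (by simpa using hinner) ?_⟩
  rw [hadd, norm_neg]
  exact sigmaNorm_le_of_mem_convexHull hS head_mem head_ne (norm_pos_iff.2 head_ne)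
    (sum_compl_smul_mem_convexHull he hSe hs hT hle hpos)

end OrthonormalExpansion

section EntryOperator

lemma sum_comp_eigenvalues {𝕜 ι M : Type*} [RCLike 𝕜] [Fintype ι] [DecidableEq ι]
    [AddCommMonoid M] {A : Matrix ι ι 𝕜} (hA : A.IsHermitian)
    {T : EuclideanSpace 𝕜 ι →ₗ[𝕜] EuclideanSpace 𝕜 ι} (hT : T.IsSymmetric)
    (hTA : T = Matrix.toEuclideanLin A) {k : ℕ} (hk : finrank 𝕜 (EuclideanSpace 𝕜 ι) = k)
    (f : ℝ → M) : ∑ i, f (hA.eigenvalues i) = ∑ i, f (hT.eigenvalues hk i) := by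
  subst hTA
  obtain rfl : k = Fintype.card ι := hk.symm.trans finrank_euclideanSpace
  exact Equiv.sum_comp _ fun i => f (hA.eigenvalues₀ i)

variable {m n ι : Type*}

/-- The rank-one matrix `v uᵀ` as a vector of entries. -/
def outer (v : EuclideanSpace ℝ m) (u : EuclideanSpace ℝ n) : EuclideanSpace ℝ (m × n) :=
  WithLp.toLp 2 fun p => v p.1 * u p.2

variable [Fintype n]

/-- The operator `v ↦ M v` whose matrix `M` has the given entries. It identifies the Frobenius
Hilbert space of matrices, written as vectors indexed by `m × n`, with a space of operators. -/
def entryOperator :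
    EuclideanSpace ℝ (m × n) →ₗ[ℝ] EuclideanSpace ℝ n →ₗ[ℝ] EuclideanSpace ℝ m :=
  Matrix.toEuclideanLin.toLinearMap ∘ₗ
    { toFun := fun x => Matrix.of fun i j => x (i, j)
      map_add' := fun _ _ => rfl
      map_smul' := fun _ _ => rfl }

lemma entryOperator_injective : Function.Injective (entryOperator (m := m) (n := n)) := by
  intro x y h
  ext ⟨i, j⟩
  exact congrFun (congrFun (Matrix.toEuclideanLin.injective h) i) j

lemma entryOperator_apply (x : EuclideanSpace ℝ (m × n)) (w : EuclideanSpace ℝ n) (i : m) :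
    entryOperator x w i = ∑ j, x (i, j) * w j := rfl

lemma entryOperator_outer (v : EuclideanSpace ℝ m) (u w : EuclideanSpace ℝ n) :
    entryOperator (outer v u) w = (inner ℝ u w : ℝ) • v := by
  ext i
  simp only [entryOperator_apply, outer, PiLp.inner_apply, PiLp.smul_apply, smul_eq_mul,
    Finset.sum_mul, RCLike.inner_apply, conj_trivial]
  exact Finset.sum_congr rfl fun j _ => by ring

lemma finrank_range_entryOperator_sum_outer_le (v : ι → EuclideanSpace ℝ m)
    (u : ι → EuclideanSpace ℝ n) (c : ι → ℝ) (R : Finset ι) :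
    finrank ℝ (entryOperator (∑ i ∈ R, c i • outer (v i) (u i))).range ≤ R.card := by
  have hle : (entryOperator (∑ i ∈ R, c i • outer (v i) (u i))).range ≤
      Submodule.span ℝ (R.image v : Set (EuclideanSpace ℝ m)) := by
    rintro _ ⟨w, rfl⟩
    simp only [map_sum, map_smul, LinearMap.sum_apply, LinearMap.smul_apply, entryOperator_outer]
    exact Submodule.sum_mem _ fun i hi => Submodule.smul_mem _ _ (Submodule.smul_mem _ _
      (Submodule.subset_span (Finset.mem_coe.2 (Finset.mem_image_of_mem v hi))))
  exact (Submodule.finrank_mono hle).trans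
    ((finrank_span_finset_le_card _).trans Finset.card_image_le)

lemma finrank_range_entryOperator_smul_le (c : ℝ) (x : EuclideanSpace ℝ (m × n)) :
    finrank ℝ (entryOperator (c • x)).range ≤ finrank ℝ (entryOperator x).range := by
  refine Submodule.finrank_mono ?_
  rintro _ ⟨w, rfl⟩
  exact ⟨c • w, by simp⟩

lemma rank_of_eq_finrank_range [Finite m] (x : EuclideanSpace ℝ (m × n)) :
    (Matrix.of fun i j => x (i, j)).rank = finrank ℝ (entryOperator x).range := by
  have := Fintype.ofFinite m
  rw [Matrix.rank_eq_finrank_range_toLin _ (EuclideanSpace.basisFun m ℝ).toBasis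
    (EuclideanSpace.basisFun n ℝ).toBasis, ← Matrix.toEuclideanLin_eq_toLin_orthonormal]
  rfl

variable [Fintype m]

lemma inner_outer (v v' : EuclideanSpace ℝ m) (u u' : EuclideanSpace ℝ n) :
    inner ℝ (outer v u) (outer v' u') = (inner ℝ v v' : ℝ) * inner ℝ u u' := by
  simp only [outer, PiLp.inner_apply, Fintype.sum_prod_type, Finset.sum_mul_sum,
    RCLike.inner_apply, conj_trivial]
  exact Finset.sum_congr rfl fun i _ => Finset.sum_congr rfl fun j _ => by ring

lemma orthonormal_outer {v : ι → EuclideanSpace ℝ m} {u : ι → EuclideanSpace ℝ n}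
    (hv : Orthonormal ℝ v) (hu : Orthonormal ℝ u) : Orthonormal ℝ fun i => outer (v i) (u i) := by
  rw [orthonormal_iff_ite] at hv hu ⊢
  intro i j
  rw [inner_outer, hv, hu]
  split_ifs <;> simp

lemma exists_eq_sum_singularValues_smul_outer {n : ℕ} (z : EuclideanSpace ℝ (Fin n × Fin n)) :
    ∃ v u : OrthonormalBasis (Fin n) ℝ (EuclideanSpace ℝ (Fin n)),
      ∑ i : Fin n, (entryOperator z).singularValues i • outer (v i) (u i) = z := by
  obtain ⟨u, v, huv⟩ := exists_singularValueDecomposition (entryOperator z)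
    finrank_euclideanSpace_fin finrank_euclideanSpace_fin
  refine ⟨v, u, entryOperator_injective (u.toBasis.ext fun j => ?_)⟩
  simp [huv, entryOperator_outer, u.inner_eq_ite]

lemma nuclearNorm_of_eq_sum_singularValues {n : ℕ} (x : EuclideanSpace ℝ (Fin n × Fin n)) :
    nuclearNorm n (Matrix.of fun i j => x (i, j)) =
      ∑ i : Fin n, (entryOperator x).singularValues i := by
  have hA : (entryOperator x).adjoint ∘ₗ entryOperator x = Matrix.toEuclideanLin
      ((Matrix.of fun i j => x (i, j)).conjTranspose * Matrix.of fun i j => x (i, j)) := by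
    rw [Matrix.toLpLin_mul_same, Matrix.toEuclideanLin_conjTranspose_eq_adjoint]
    rfl
  calc nuclearNorm n (Matrix.of fun i j => x (i, j))
      = ∑ i, √((entryOperator x).isSymmetric_adjoint_comp_self.eigenvalues
          finrank_euclideanSpace_fin i) := sum_comp_eigenvalues _ _ hA _ _
    _ = ∑ i : Fin n, (entryOperator x).singularValues i :=
      Finset.sum_congr rfl fun i _ => ((entryOperator x).singularValues_fin _ i).symm

lemma sum_compl_singularValues_le_of_mem_descentSet {n r : ℕ}
    {z : EuclideanSpace ℝ (Fin n × Fin n)}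
    (hz : z ∈ descentSet {x | finrank ℝ (entryOperator x).range ≤ r}
      fun x => ENNReal.ofReal (∑ i : Fin n, (entryOperator x).singularValues i))
    {T : Finset (Fin n)} (hT : ∀ i : Fin n, (i : ℕ) < r → i ∈ T) :
    ∑ i ∈ Tᶜ, (entryOperator z).singularValues i ≤ ∑ i ∈ T, (entryOperator z).singularValues i := by
  obtain ⟨x, hx, hxz⟩ := hz
  refine sum_compl_singularValues_le (X := entryOperator x) finrank_euclideanSpace_fin
    finrank_euclideanSpace_fin (fun i hi => ?_) ?_
  · rw [LinearMap.singularValues_eq_zero_iff_le_finrank_range]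
    exact hx.trans (not_lt.1 fun hlt => hi (hT i hlt))
  · rw [← map_add]
    exact (ENNReal.ofReal_le_ofReal_iff
      (Finset.sum_nonneg fun i _ => LinearMap.singularValues_nonneg _ _)).1 hxz

lemma exists_ne_zero_mem_descentSet {n r : ℕ} (hr : 1 ≤ r) (hn : 1 ≤ n) :
    ∃ z ∈ descentSet {x : EuclideanSpace ℝ (Fin n × Fin n) |
        finrank ℝ (entryOperator x).range ≤ r}
      (fun x => ENNReal.ofReal (∑ i : Fin n, (entryOperator x).singularValues i)), z ≠ 0 := by
  let b := EuclideanSpace.basisFun (Fin n) ℝ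
  let i : Fin n := ⟨0, hn⟩
  refine ⟨-outer (b i) (b i), ⟨outer (b i) (b i), ?_, ?_⟩,
    neg_ne_zero.2 ((orthonormal_outer b.orthonormal b.orthonormal).ne_zero i)⟩
  · have hrank := finrank_range_entryOperator_sum_outer_le b b (fun _ => 1) {i}
    rw [Finset.sum_singleton, one_smul] at hrank
    exact hrank.trans hr
  · simp

end EntryOperator

/-- for the model of `n×n` real matrices of rank at most `r` (with the
Frobenius Hilbert structure) and the nuclear norm as regularizer, `δ_Σ(f) ≥ 1/√2`. -/
theorem stmt19 (n r : ℕ) (hr1 : 1 ≤ r) (hrn : r ≤ n) :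
    1 / Real.sqrt 2 ≤
      deltaSigma ℝ
        {x : EuclideanSpace ℝ (Fin n × Fin n) |
          (Matrix.of fun i j => x (i, j)).rank ≤ r}
        (fun x => ENNReal.ofReal (nuclearNorm n (Matrix.of fun i j => x (i, j)))) := by
  simp only [rank_of_eq_finrank_range, nuclearNorm_of_eq_sum_singularValues]
  refine le_deltaSigma (exists_ne_zero_mem_descentSet hr1 (hr1.trans hrn)) fun z hz hz0 => ?_
  obtain ⟨v, u, hzvu⟩ := exists_eq_sum_singularValues_smul_outer z
  let T : Finset (Fin n) := {i | (i : ℕ) < r}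
  have hT : T.card ≤ r := Fin.card_filter_val_lt.trans_le (min_le_right n r)
  have hle := sum_compl_singularValues_le_of_mem_descentSet hz (T := T) (by simp [T])
  have h := exists_one_div_sqrt_two_le_deltaXZ (T := T)
    (S := {x | finrank ℝ (entryOperator x).range ≤ r})
    (s := fun i : Fin n => (entryOperator z).singularValues i)
    (orthonormal_outer v.orthonormal u.orthonormal)
    (fun c y hy => (finrank_range_entryOperator_smul_le c y).trans hy)
    (fun R hR c => (finrank_range_entryOperator_sum_outer_le v u c R).trans (hR.trans hT))
    (fun i => LinearMap.singularValues_nonneg _ _)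
    (fun h0 => hz0 (by simpa [congrFun h0 _] using hzvu.symm))
    (fun i hi j hj => LinearMap.singularValues_antitone _ (by grind)) hle
  rwa [hzvu] at h
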